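/- Let R be a commutative ring in which every odd integer is invertible, and let I be an ideal of R. Suppose γ₂ : I → I is a function satisfying γ₂(x+y) = γ₂(x) + x·y + γ₂(y) for all x, y ∈ I and γ₂(a·x) = a²·γ₂(x) for all a ∈ R, x ∈ I. Then there exists a divided power structure (γₙ)ₙ≥₀ on I whose second operation is the given γ₂. (In particular 2·γ₂(x) = x² follows automatically from the two identities.) -/

import Mathlib

namespace GammaTwo

/-- Odd double factorials `(2n-1)!!`. -/
def dd : ℕ → ℕ
  | 0 => 1
  | n + 1 => (2 * n + 1) * dd n

lemma dd_odd (n : ℕ) : Odd (dd n) := by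
  induction n with
  | zero => exact odd_one
  | succ n ih => exact Odd.mul ⟨n, rfl⟩ ih

lemma dd_pos (n : ℕ) : 0 < dd n := (dd_odd n).pos

lemma fact_two_mul (n : ℕ) : (2 * n).factorial = 2 ^ n * n.factorial * dd n := by
  induction n with
  | zero => rfl
  | succ n ih =>
    rw [show 2 * (n + 1) = 2 * n + 1 + 1 by ring, Nat.factorial_succ, Nat.factorial_succ, ih,
      Nat.factorial_succ, dd]
    ring

/-- The operations, by recursion. -/
noncomputable def gam {R : Type*} [CommRing R] (γ₂ : R → R) : ℕ → R → R
  | 0, _ => 1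
  | n + 1, x =>
    if n % 2 = 0 then Ring.inverse ((n + 1 : ℕ) : R) * (x * gam γ₂ n x)
    else Ring.inverse ((dd ((n + 1) / 2) : ℕ) : R) * gam γ₂ ((n + 1) / 2) (γ₂ x)
  termination_by n => n
  decreasing_by all_goals omega

/-- The characterising properties. -/
structure Spec {R : Type*} [CommRing R] (I : Ideal R) (γ₂ : R → R) (g : ℕ → R → R) : Prop where
  hodd : ∀ n : ℕ, Odd n → IsUnit (n : R)
  hmem : ∀ x ∈ I, γ₂ x ∈ I
  hadd : ∀ x ∈ I, ∀ y ∈ I, γ₂ (x + y) = γ₂ x + x * y + γ₂ y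
  hsmul : ∀ (a : R), ∀ x ∈ I, γ₂ (a * x) = a ^ 2 * γ₂ x
  zero : ∀ x, g 0 x = 1
  even : ∀ n x, (dd n : R) * g (2 * n) x = g n (γ₂ x)
  odd : ∀ n x, ((2 * n + 1 : ℕ) : R) * g (2 * n + 1) x = x * g (2 * n) x

lemma spec_gam {R : Type*} [CommRing R] (I : Ideal R)
    (hodd : ∀ n : ℤ, Odd n → IsUnit (n : R))
    (γ₂ : R → R)
    (hmem : ∀ x ∈ I, γ₂ x ∈ I)
    (hadd : ∀ x ∈ I, ∀ y ∈ I, γ₂ (x + y) = γ₂ x + x * y + γ₂ y)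
    (hsmul : ∀ (a : R), ∀ x ∈ I, γ₂ (a * x) = a ^ 2 * γ₂ x) : Spec I γ₂ (gam γ₂) := by
  have ho : ∀ n : ℕ, Odd n → IsUnit (n : R) := by
    intro n hn
    have := hodd n (by exact_mod_cast hn)
    simpa using this
  refine ⟨ho, hmem, hadd, hsmul, fun x => by rw [gam], ?_, ?_⟩
  · intro n x
    cases n with
    | zero => simp [gam, dd]
    | succ n =>
      rw [show 2 * (n + 1) = (2 * n + 1) + 1 by ring, gam, if_neg (by omega),
        show (2 * n + 1 + 1) / 2 = n + 1 by omega, ← mul_assoc,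
        Ring.mul_inverse_cancel _ (ho _ (dd_odd _)), one_mul]
  · intro n x
    rw [gam, if_pos (by omega), ← mul_assoc, Ring.mul_inverse_cancel _ (ho _ ⟨n, rfl⟩), one_mul]

lemma choose_fact (m n : ℕ) : (m + n).choose m * (m.factorial * n.factorial) = (m + n).factorial := by
  have := Nat.choose_mul_factorial_mul_factorial (Nat.le_add_right m n)
  rw [Nat.add_sub_cancel_left] at this
  rw [← this]; ring

lemma choose_dd (a b : ℕ) :
    dd a * dd b * (2 * a + 2 * b).choose (2 * a) = (a + b).choose a * dd (a + b) := by
  have h1 := choose_fact (2 * a) (2 * b)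
  have h2 := choose_fact a b
  have h3 : (2 * a + 2 * b).factorial
      = 2 ^ (a + b) * (a + b).factorial * dd (a + b) := by rw [← mul_add]; exact fact_two_mul (a + b)
  rw [h3, ← h2, fact_two_mul, fact_two_mul] at h1
  have hp : 0 < 2 ^ (a + b) * (a.factorial * b.factorial) := by positivity
  apply Nat.eq_of_mul_eq_mul_left hp
  rw [pow_add] at *
  linarith

/-- number of partitions of `m*n` points into `n` blocks of size `m` -/
def B (m n : ℕ) : ℕ := (m * n).factorial / (m.factorial ^ n * n.factorial)

lemma B_mul (m n : ℕ) (hm : 0 < m) : B m n * (m.factorial ^ n * n.factorial) = (m * n).factorial := by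
  have h := Nat.uniformBell_mul_eq n hm.ne'
  unfold B
  apply Nat.div_mul_cancel
  exact ⟨n.uniformBell m, by rw [mul_comm m n, ← h]; ring⟩

lemma B_even (m k : ℕ) (hm : 0 < m) : dd k * B m (2 * k) = B m 2 ^ k * B (2 * m) k := by
  have h1 := B_mul m (2 * k) hm
  have h2 := B_mul m 2 hm
  have h3 := B_mul (2 * m) k (by omega)
  rw [fact_two_mul] at h1
  have h4 : (2 * m).factorial ^ k = B m 2 ^ k * (m.factorial ^ (2 * k) * 2 ^ k) := by
    rw [mul_comm 2 m, ← h2]; rw [mul_pow, mul_pow, ← pow_mul]; norm_num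
  rw [h4, show 2 * m * k = m * (2 * k) by ring, ← h1] at h3
  have hp : 0 < m.factorial ^ (2 * k) * (2 ^ k * k.factorial) := by positivity
  apply Nat.eq_of_mul_eq_mul_left hp
  linarith

lemma B_odd (m k : ℕ) (hm : 0 < m) :
    (2 * k + 1) * B m (2 * k + 1) = B m (2 * k) * (m + m * (2 * k)).choose m := by
  have h1 := B_mul m (2 * k) hm
  have h2 := B_mul m (2 * k + 1) hm
  have h3 := choose_fact m (m * (2 * k))
  rw [show m + m * (2 * k) = m * (2 * k + 1) by ring] at *
  rw [← h2, ← h1, pow_succ, Nat.factorial_succ] at h3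
  have hp : 0 < m.factorial ^ (2 * k) * m.factorial * (2 * k).factorial := by positivity
  apply Nat.eq_of_mul_eq_mul_left hp
  linarith

lemma two_B (m : ℕ) (hm : 0 < m) : 2 * B m 2 = (m + m).choose m := by
  have h1 := B_mul m 2 hm
  have h3 := choose_fact m m
  rw [show m + m = m * 2 by ring, ← h1] at *
  have hp : 0 < m.factorial ^ 2 := by positivity
  apply Nat.eq_of_mul_eq_mul_left hp
  simp only [Nat.factorial_two] at h3
  nlinarith

lemma B_two_even (a : ℕ) (ha : 0 < a) : dd a ^ 2 * B (2 * a) 2 = B a 2 * dd (2 * a) := by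
  have h1 := two_B a ha
  have h2 := two_B (2 * a) (by omega)
  have h3 := choose_dd a a
  rw [← h1, ← h2, ← two_mul] at h3
  nlinarith

lemma B_two_odd (a : ℕ) :
    (2 * a + 1) ^ 2 * B (2 * a + 1) 2 = (2 * a + 2 * a).choose (2 * a) * ((2 * a + 1) * (4 * a + 1)) := by
  have h1 := B_mul (2 * a + 1) 2 (by omega)
  have h2 := choose_fact (2 * a) (2 * a)
  rw [show (2 * a + 1) * 2 = 2 * a + 2 * a + 1 + 1 by ring,
    Nat.factorial_succ (2 * a + 2 * a + 1), Nat.factorial_succ (2 * a + 2 * a), ← h2,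
    Nat.factorial_succ (2 * a), Nat.factorial_two] at h1
  have hp : 0 < 2 * (2 * a).factorial ^ 2 := by positivity
  apply Nat.eq_of_mul_eq_mul_left hp
  linarith

open Finset in
lemma coeff_id (n a : ℕ) :
    ∑ p ∈ antidiagonal n, ∑ q ∈ antidiagonal p.2,
      (if 2 * p.1 + q.1 = a then n.choose p.1 * (p.2.choose q.1 * 2 ^ q.1) else 0)
      = (2 * n).choose a := by
  have h : ((Polynomial.X + 1 : Polynomial ℕ)) ^ (2 * n) =
      ∑ p ∈ antidiagonal n, ∑ q ∈ antidiagonal p.2,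
        Polynomial.monomial (2 * p.1 + q.1) (n.choose p.1 * (p.2.choose q.1 * 2 ^ q.1)) := by
    rw [pow_mul, show (Polynomial.X + 1 : Polynomial ℕ) ^ 2
      = Polynomial.X ^ 2 + (2 * Polynomial.X + 1) by ring, (Commute.all _ _).add_pow']
    refine sum_congr rfl fun p _ => ?_
    rw [(Commute.all _ _).add_pow', mul_sum, smul_sum]
    refine sum_congr rfl fun q _ => ?_
    rw [← Polynomial.C_mul_X_pow_eq_monomial]
    have hC : ∀ t : ℕ, (Polynomial.C t : Polynomial ℕ) = (t : Polynomial ℕ) := fun t => by simp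
    rw [hC]
    simp only [nsmul_eq_mul, one_pow]
    push_cast
    ring
  have h2 := congrArg (fun P => Polynomial.coeff P a) h
  simp only [Polynomial.coeff_X_add_one_pow, Polynomial.finsetSum_coeff,
    Polynomial.coeff_monomial] at h2
  simpa using h2.symm

lemma w_id (i j k : ℕ) :
    dd i * dd k * j.factorial * (2 * i + j).choose (2 * i) * (j + 2 * k).choose j
      * (2 * (i + (j + k))).choose (2 * i + j)
     = dd (i + (j + k)) * ((i + (j + k)).choose i * ((j + k).choose j * 2 ^ j)) := by
  have h1 := choose_fact (2 * i) j
  have h2 := choose_fact j (2 * k)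
  have h3 := choose_fact (2 * i + j) (j + 2 * k)
  have h4 := choose_fact i (j + k)
  have h5 := choose_fact j k
  rw [show 2 * i + j + (j + 2 * k) = 2 * (i + (j + k)) by ring] at h3
  rw [fact_two_mul (i + (j + k)), ← h1, ← h2, ← h4, ← h5, fact_two_mul, fact_two_mul] at h3
  have hp : 0 < 2 ^ i * 2 ^ k * (i.factorial * j.factorial * k.factorial) := by positivity
  apply Nat.eq_of_mul_eq_mul_left hp
  have e : 2 ^ (i + (j + k)) = 2 ^ i * (2 ^ j * 2 ^ k) := by rw [pow_add, pow_add]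
  rw [e] at h3
  linarith

open Finset in
lemma w_sum (n a : ℕ) (ha : a ≤ 2 * n) :
    ∑ p ∈ antidiagonal n, ∑ q ∈ antidiagonal p.2,
      (if 2 * p.1 + q.1 = a then dd p.1 * dd q.2 * q.1.factorial * (2 * p.1 + q.1).choose (2 * p.1)
        * (q.1 + 2 * q.2).choose q.1 else 0) = dd n := by
  have hp : 0 < (2 * n).choose a := Nat.choose_pos ha
  apply Nat.eq_of_mul_eq_mul_right hp
  conv_rhs => rw [← coeff_id n a]
  simp only [sum_mul, mul_sum]
  refine sum_congr rfl fun p hpn => sum_congr rfl fun q hq => ?_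
  rw [HasAntidiagonal.mem_antidiagonal] at hpn hq
  split_ifs with h
  · rw [← h, ← hpn, ← hq]
    exact w_id _ _ _
  · simp

open Finset in
lemma w_group {R : Type*} [CommRing R] (n : ℕ) (F : ℕ → ℕ → R) :
    ∑ p ∈ antidiagonal n, ∑ q ∈ antidiagonal p.2,
      ((dd p.1 * dd q.2 * q.1.factorial * (2 * p.1 + q.1).choose (2 * p.1)
        * (q.1 + 2 * q.2).choose q.1 : ℕ) : R) * F (2 * p.1 + q.1) (q.1 + 2 * q.2)
    = (dd n : R) * ∑ p ∈ antidiagonal (2 * n), F p.1 p.2 := by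
  have : ∀ r ∈ antidiagonal (2 * n), (dd n : R) * F r.1 r.2 =
      ∑ p ∈ antidiagonal n, ∑ q ∈ antidiagonal p.2,
      (if 2 * p.1 + q.1 = r.1 then
      ((dd p.1 * dd q.2 * q.1.factorial * (2 * p.1 + q.1).choose (2 * p.1)
        * (q.1 + 2 * q.2).choose q.1 : ℕ) : R) * F (2 * p.1 + q.1) (q.1 + 2 * q.2) else 0) := by
    intro r hr
    rw [HasAntidiagonal.mem_antidiagonal] at hr
    rw [← w_sum n r.1 (by omega)]
    push_cast
    simp only [sum_mul]
    refine sum_congr rfl fun p hpn => sum_congr rfl fun q hq => ?_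
    rw [HasAntidiagonal.mem_antidiagonal] at hpn hq
    split_ifs with h
    · rw [show q.1 + 2 * q.2 = r.2 by omega, h]
    · simp
  rw [mul_sum, sum_congr rfl this, sum_comm]
  refine sum_congr rfl fun p hpn => ?_
  rw [sum_comm]
  refine sum_congr rfl fun q hq => ?_
  rw [HasAntidiagonal.mem_antidiagonal] at hpn hq
  rw [sum_eq_single (2 * p.1 + q.1, q.1 + 2 * q.2)]
  · simp
  · intro b hb hne
    rw [HasAntidiagonal.mem_antidiagonal] at hb
    rw [if_neg]
    intro h
    apply hne
    ext
    · simp [h]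
    · simp only; omega
  · intro h
    exfalso
    apply h
    rw [HasAntidiagonal.mem_antidiagonal]
    simp only; omega

namespace Spec
variable {R : Type*} [CommRing R] {I : Ideal R} {γ₂ : R → R} {g : ℕ → R → R}

lemma two (S : Spec I γ₂ g) {x : R} (hx : x ∈ I) : x * x = 2 * γ₂ x := by
  have h0 : γ₂ 0 = 0 := by
    have := S.hsmul 0 0 I.zero_mem
    simpa using this
  have h1 := S.hsmul (-1) x hx
  have h2 := S.hadd x hx (-1 * x) (I.mul_mem_left _ hx)
  rw [h1] at h2
  have h3 : x + -1 * x = 0 := by ring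
  rw [h3, h0] at h2
  linear_combination h2

lemma udd (S : Spec I γ₂ g) (n : ℕ) : IsUnit (dd n : R) := S.hodd _ (dd_odd n)
lemma uodd (S : Spec I γ₂ g) (n : ℕ) : IsUnit ((2 * n + 1 : ℕ) : R) := S.hodd _ ⟨n, rfl⟩

lemma one (S : Spec I γ₂ g) (x : R) : g 1 x = x := by
  have := S.odd 0 x
  simpa [S.zero] using this

lemma g_two (S : Spec I γ₂ g) (x : R) : g 2 x = γ₂ x := by
  have := S.even 1 x
  simpa [S.one, dd] using this

lemma mem (S : Spec I γ₂ g) (n : ℕ) : 0 < n → ∀ x ∈ I, g n x ∈ I := by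
  induction n using Nat.strong_induction_on with
  | _ n ih =>
  intro hn x hx
  obtain ⟨k, rfl | rfl⟩ := n.even_or_odd'
  · have := ih k (by omega) (by omega) _ (S.hmem x hx)
    rw [← S.even] at this
    exact (Ideal.unit_mul_mem_iff_mem I (S.udd k)).1 this
  · have : x * g (2 * k) x ∈ I := I.mul_mem_right _ hx
    rw [← S.odd] at this
    exact (Ideal.unit_mul_mem_iff_mem I (S.uodd k)).1 this

lemma smul (S : Spec I γ₂ g) (n : ℕ) : ∀ (a : R), ∀ x ∈ I, g n (a * x) = a ^ n * g n x := by
  induction n using Nat.strong_induction_on with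
  | _ n ih =>
  intro a x hx
  obtain ⟨k, rfl | rfl⟩ := n.even_or_odd'
  · rcases Nat.eq_zero_or_pos k with rfl | hk
    · simp [S.zero]
    apply (S.udd k).mul_left_cancel
    rw [S.even, S.hsmul a x hx, ih k (by omega) _ _ (S.hmem x hx), ← S.even]
    ring
  · apply (S.uodd k).mul_left_cancel
    rw [S.odd, ih (2 * k) (by omega) _ _ hx]
    linear_combination (-a ^ (2 * k + 1)) * S.odd k x

lemma succ (S : Spec I γ₂ g) (n : ℕ) : ∀ x ∈ I, x * g n x = ((n + 1 : ℕ) : R) * g (n + 1) x := by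
  induction n using Nat.strong_induction_on with
  | _ n ih =>
  intro x hx
  obtain ⟨k, rfl | rfl⟩ := n.even_or_odd'
  · exact (S.odd k x).symm
  · apply ((S.udd k).mul (S.uodd k)).mul_left_cancel
    have h1 := ih k (by omega) _ (S.hmem x hx)
    rw [← S.even, ← S.even, dd] at h1
    have h2 := S.odd k x
    have h3 := S.two hx
    rw [show 2 * k + 1 + 1 = 2 * (k + 1) by ring]
    push_cast at *
    linear_combination 2 * h1 + dd k * x * h2 + dd k * g (2 * k) x * h3

lemma pow_eq (S : Spec I γ₂ g) (n : ℕ) (x : R) (hx : x ∈ I) :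
    x ^ n = (n.factorial : R) * g n x := by
  induction n with
  | zero => simp [S.zero]
  | succ n ih =>
    rw [pow_succ, ih, Nat.factorial_succ]
    have := S.succ n x hx
    push_cast at *
    linear_combination n.factorial * this

lemma mul (S : Spec I γ₂ g) (m : ℕ) : ∀ (n : ℕ), ∀ x ∈ I,
    g m x * g n x = ((m + n).choose m : R) * g (m + n) x := by
  induction m using Nat.strong_induction_on with
  | _ m ih =>
  intro n x hx
  have ee : ∀ a b, 2 * a ≤ m → g (2 * a) x * g (2 * b) x
      = ((2 * a + 2 * b).choose (2 * a) : R) * g (2 * a + 2 * b) x := by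
    intro a b ha
    rcases Nat.eq_zero_or_pos a with rfl | hk
    · simp [S.zero]
    apply ((S.udd a).mul (S.udd b)).mul_left_cancel
    have h := ih a (by omega) b _ (S.hmem x hx)
    rw [← S.even, ← S.even, ← S.even] at h
    have h2 : ((dd a * dd b * (2 * a + 2 * b).choose (2 * a) : ℕ) : R) = _ :=
      congrArg Nat.cast (choose_dd a b)
    push_cast at h2
    rw [mul_add] at h
    linear_combination h - g (2 * a + 2 * b) x * h2
  have eo : ∀ a n, 2 * a ≤ m → g (2 * a) x * g n x
      = ((2 * a + n).choose (2 * a) : R) * g (2 * a + n) x := by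
    intro a n ha
    obtain ⟨b, rfl | rfl⟩ := n.even_or_odd'
    · exact ee a b ha
    · apply (S.uodd b).mul_left_cancel
      have h := ee a b ha
      have h1 := S.odd b x
      have h2 := S.succ (2 * a + 2 * b) x hx
      have h3 : (((2 * a + 2 * b + 1) * (2 * a + 2 * b).choose (2 * a) : ℕ) : R)
         = ((2 * a + 2 * b + 1).choose (2 * a) * (2 * b + 1) : ℕ) := by
        rw [mul_comm (2 * a + 2 * b + 1), Nat.choose_mul_succ_eq]
        congr 2
        omega
      push_cast at *
      rw [← add_assoc]
      linear_combination x * h + g (2 * a) x * h1 + (2 * a + 2 * b).choose (2 * a) * h2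
        + g (2 * a + 2 * b + 1) x * h3
  obtain ⟨a, rfl | rfl⟩ := m.even_or_odd'
  · exact eo a n le_rfl
  · apply (S.uodd a).mul_left_cancel
    have h := eo a n (by omega)
    have h1 := S.odd a x
    have h2 := S.succ (2 * a + n) x hx
    have h3 : (((2 * a + n + 1) * (2 * a + n).choose (2 * a) : ℕ) : R)
         = ((2 * a + n + 1).choose (2 * a + 1) * (2 * a + 1) : ℕ) := by
      rw [Nat.add_one_mul_choose_eq]
    push_cast at *
    rw [show 2 * a + 1 + n = 2 * a + n + 1 by ring]
    linear_combination x * h + g n x * h1 + (2 * a + n).choose (2 * a) * h2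
        + g (2 * a + n + 1) x * h3

open Finset in
lemma add (S : Spec I γ₂ g) (n : ℕ) : ∀ x ∈ I, ∀ y ∈ I,
    g n (x + y) = ∑ p ∈ antidiagonal n, g p.1 x * g p.2 y := by
  induction n using Nat.strong_induction_on with
  | _ n ih =>
  intro x hx y hy
  obtain ⟨k, rfl | rfl⟩ := n.even_or_odd'
  · rcases Nat.eq_zero_or_pos k with rfl | hk
    · simp [S.zero]
    apply (S.udd k).mul_left_cancel
    have hxy : x * y ∈ I := I.mul_mem_left _ hy
    rw [S.even, S.hadd x hx y hy, add_assoc,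
      ih k (by omega) _ (S.hmem x hx) _ (I.add_mem hxy (S.hmem y hy)),
      ← w_group k (fun a b => g a x * g b y)]
    refine sum_congr rfl fun p hp => ?_
    rw [HasAntidiagonal.mem_antidiagonal] at hp
    rw [ih p.2 (by omega) _ hxy _ (S.hmem y hy), mul_sum]
    refine sum_congr rfl fun q hq => ?_
    rw [S.smul _ _ _ hy, S.pow_eq _ x hx, ← S.even, ← S.even]
    have h1 := S.mul (2 * p.1) q.1 x hx
    have h2 := S.mul q.1 (2 * q.2) y hy
    push_cast
    linear_combination (dd p.1 * dd q.2 * q.1.factorial) * (g q.1 y * g (2 * q.2) y) * h1 +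
      (dd p.1 * dd q.2 * q.1.factorial) * ((2 * p.1 + q.1).choose (2 * p.1) * g (2 * p.1 + q.1) x) * h2
  · apply (S.uodd k).mul_left_cancel
    rw [S.odd, ih (2 * k) (by omega) _ hx _ hy]
    have e1 : ∑ p ∈ antidiagonal (2 * k + 1), (p.1 : R) * (g p.1 x * g p.2 y)
        = x * ∑ p ∈ antidiagonal (2 * k), g p.1 x * g p.2 y := by
      rw [Finset.Nat.sum_antidiagonal_succ, mul_sum]
      simp only [Nat.cast_zero, zero_mul, zero_add]
      refine sum_congr rfl fun p _ => ?_
      rw [← mul_assoc, ← mul_assoc, S.succ _ x hx]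
    have e2 : ∑ p ∈ antidiagonal (2 * k + 1), (p.2 : R) * (g p.1 x * g p.2 y)
        = y * ∑ p ∈ antidiagonal (2 * k), g p.1 x * g p.2 y := by
      rw [Finset.Nat.sum_antidiagonal_succ', mul_sum]
      simp only [Nat.cast_zero, zero_mul, zero_add]
      refine sum_congr rfl fun p _ => ?_
      rw [mul_left_comm, mul_left_comm y, S.succ _ y hy]
    rw [add_mul, ← e1, ← e2, ← sum_add_distrib, mul_sum]
    refine sum_congr rfl fun p hp => ?_
    rw [HasAntidiagonal.mem_antidiagonal] at hp
    rw [← hp]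
    push_cast
    ring

lemma comp_two (S : Spec I γ₂ g) (m : ℕ) : 0 < m → ∀ x ∈ I,
    γ₂ (g m x) = (B m 2 : R) * g (2 * m) x := by
  induction m using Nat.strong_induction_on with
  | _ m ih =>
  intro hm x hx
  obtain ⟨a, rfl | rfl⟩ := m.even_or_odd'
  · have h1 := ih a (by omega) (by omega) _ (S.hmem x hx)
    rw [← S.even, ← S.even, S.hsmul _ _ (S.mem _ hm x hx)] at h1
    have h2 : ((dd a ^ 2 * B (2 * a) 2 : ℕ) : R) = _ := congrArg Nat.cast (B_two_even a (by omega))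
    push_cast at h2
    apply ((S.udd a).pow 2).mul_left_cancel
    linear_combination h1 - g (2 * (2 * a)) x * h2
  · apply ((S.uodd a).pow 2).mul_left_cancel
    have h1 := S.hsmul ((2 * a + 1 : ℕ) : R) _ (S.mem _ hm x hx)
    rw [S.odd, mul_comm x, S.hsmul _ _ hx] at h1
    have h2 := S.mul (2 * a) (2 * a) x hx
    have h3 := S.mul 2 (2 * a + 2 * a) x hx
    rw [S.g_two] at h3
    have h4 : (((2 * a + 1) ^ 2 * B (2 * a + 1) 2 : ℕ) : R) = _ := congrArg Nat.cast (B_two_odd a)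
    have h5 : (2 + (2 * a + 2 * a)).choose 2 = (2 * a + 1) * (4 * a + 1) := by
      rw [Nat.choose_two_right]
      apply Nat.div_eq_of_eq_mul_left (by norm_num)
      rw [show 2 + (2 * a + 2 * a) - 1 = 4 * a + 1 by omega]
      ring
    rw [h5, show 2 + (2 * a + 2 * a) = 2 * (2 * a + 1) by ring] at h3
    push_cast at *
    linear_combination -h1 + γ₂ x * h2 + (2 * a + 2 * a).choose (2 * a) * h3
      - g (2 * (2 * a + 1)) x * h4

lemma comp (S : Spec I γ₂ g) (n : ℕ) : ∀ m, 0 < m → ∀ x ∈ I,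
    g n (g m x) = (B m n : R) * g (m * n) x := by
  induction n using Nat.strong_induction_on with
  | _ n ih =>
  intro m hm x hx
  obtain ⟨k, rfl | rfl⟩ := n.even_or_odd'
  · rcases Nat.eq_zero_or_pos k with rfl | hk
    · simp [S.zero, B]
    apply (S.udd k).mul_left_cancel
    have h2 : ((dd k * B m (2 * k) : ℕ) : R) = _ := congrArg Nat.cast (B_even m k hm)
    rw [S.even, S.comp_two m hm x hx, S.smul _ _ _ (S.mem _ (by omega) x hx),
      ih k (by omega) _ (by omega) x hx, show 2 * m * k = m * (2 * k) by ring]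
    push_cast at h2
    linear_combination -g (m * (2 * k)) x * h2
  · apply (S.uodd k).mul_left_cancel
    have h2 : (((2 * k + 1) * B m (2 * k + 1) : ℕ) : R) = _ := congrArg Nat.cast (B_odd m k hm)
    have h3 := S.mul m (m * (2 * k)) x hx
    rw [S.odd, ih (2 * k) (by omega) m hm x hx]
    rw [show m * (2 * k + 1) = m + m * (2 * k) by ring]
    push_cast at *
    linear_combination (B m (2 * k)) * h3 - g (m + m * (2 * k)) x * h2

end Spec
end GammaTwo


/-- A divided power structure on an ideal `I` of a commutative ring `R`:
a family of functions `γₙ : I → R` (encoded as `dpow : ℕ → R → R`, constrained on `I`)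
satisfying the five axioms of Berthelot–Ogus. -/
structure DividedPowerStructure (R : Type*) [CommRing R] (I : Ideal R) where
  dpow : ℕ → R → R
  dpow_zero : ∀ x ∈ I, dpow 0 x = 1
  dpow_one : ∀ x ∈ I, dpow 1 x = x
  dpow_mem : ∀ n : ℕ, 0 < n → ∀ x ∈ I, dpow n x ∈ I
  dpow_add : ∀ (n : ℕ), ∀ x ∈ I, ∀ y ∈ I,
    dpow n (x + y) = ∑ i ∈ Finset.range (n + 1), dpow i x * dpow (n - i) y
  dpow_smul : ∀ (n : ℕ) (a : R), ∀ x ∈ I, dpow n (a * x) = a ^ n * dpow n x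
  dpow_mul : ∀ (m n : ℕ), ∀ x ∈ I,
    dpow m x * dpow n x = ((m + n).choose m : R) * dpow (m + n) x
  dpow_comp : ∀ (m n : ℕ), 0 < m → ∀ x ∈ I,
    dpow n (dpow m x) =
      (((m * n).factorial / (m.factorial ^ n * n.factorial) : ℕ) : R) * dpow (m * n) x

/-- If every odd integer is invertible in `R` and `γ₂ : I → I` satisfies
`γ₂(x+y) = γ₂ x + x·y + γ₂ y` and `γ₂(a·x) = a² γ₂ x`, then there is a divided power
structure on `I` whose second operation is `γ₂`. -/
theorem exists_dividedPowerStructure_of_gamma_two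
    (R : Type*) [CommRing R] (I : Ideal R)
    (hodd : ∀ n : ℤ, Odd n → IsUnit (n : R))
    (γ₂ : R → R)
    (hmem : ∀ x ∈ I, γ₂ x ∈ I)
    (hadd : ∀ x ∈ I, ∀ y ∈ I, γ₂ (x + y) = γ₂ x + x * y + γ₂ y)
    (hsmul : ∀ (a : R), ∀ x ∈ I, γ₂ (a * x) = a ^ 2 * γ₂ x) :
    ∃ D : DividedPowerStructure R I, ∀ x ∈ I, D.dpow 2 x = γ₂ x := by
  have S := GammaTwo.spec_gam I hodd γ₂ hmem hadd hsmul
  refine ⟨{ dpow := GammaTwo.gam γ₂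
            dpow_zero := fun x _ => S.zero x
            dpow_one := fun x _ => S.one x
            dpow_mem := S.mem
            dpow_add := fun n x hx y hy => ?_
            dpow_smul := S.smul
            dpow_mul := S.mul
            dpow_comp := fun m n hm x hx => S.comp n m hm x hx }, fun x _ => S.g_two x⟩
  rw [S.add n x hx y hy,
    Finset.Nat.sum_antidiagonal_eq_sum_range_succ (fun i j => GammaTwo.gam γ₂ i x * GammaTwo.gam γ₂ j y)]
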